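/- arXiv:1511.04066 — 4 statements merged into one kernel-verified Lean document; each statement's English description precedes it below -/
import Mathlib

section
/- For every A ≥ 1 there exist constants c₁, c₂ ≥ 1 (depending only on A) such that the following holds for every ε ∈ (0,1/2). Let P and Q be PBDs with |E[P] − E[Q]| ≤ A·√(Var[P] + 1) and (Var[Q]+1)/A ≤ Var[P]+1 ≤ A·(Var[Q]+1). Let M = ⌈c₁·(log(1/ε) + √(Var[P]·log(1/ε)))⌉ and ℓ = ⌈c₂·log(1/ε)⌉. If Σ_{ξ=−ℓ}^{ℓ} |P̂(ξ) − Q̂(ξ)|² ≤ ε²/16, where P̂ and Q̂ denote the discrete Fourier transforms modulo M, then dTV(P,Q) ≤ ε. -/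
/-!
Write `L = log (1/ε)`, `V = Var[P]`, `D = √(L (V + L)) ≤ L + √(V L)`, and `d = P - Q`.

A Chernoff bound (`pbd_tail`, `pbd_window_tail`) shows that `P` and `Q` each have mass at most
`2 ε⁶` outside the window of radius `(4A + 6) D` around `E[P]`. With `c₁ = 8A + 12` this window
fits in one period, so reducing `d` modulo `M` loses at most twice its mass outside the window in
`ℓ¹` norm (`l1_le_fold`). By Cauchy–Schwarz and Parseval on `ZMod M` (`zmod_parseval`,
`sq_fold_le`), the squared `ℓ¹` norm of the reduction is at most the sum of `|P̂ - Q̂|²` over all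
frequencies modulo `M`.

The frequencies in `[-l, l]` contribute at most `ε² / 16` by hypothesis. For the others, the
representatives `ξ ∈ [-M/2, M/2]` satisfy `|P̂(ξ)|² ≤ exp (-16 V ξ² / M²)`, and likewise for `Q`
(`norm_sq_dft_pbd_le`). If `V < 4 A L`, then `M ≤ 2 l` and no other frequency exists; if
`V ≥ 4 A L`, then `Var[Q] ≥ V / (2A)` and `M` is at most a multiple of `√(V L)`, so that for `c₂`
large in terms of `A` and `c₁` the exponent is at least `7 |ξ|` and a geometric series bounds the
remaining contribution by `16 ε⁶ ≤ ε²` (`high_freq_regime`, `high_freq_bound`, `freq_sum_le`).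
-/


open scoped Classical

/-- The pmf of the Poisson binomial distribution with parameter vector `p`. -/
noncomputable def pbdPmf {ι : Type*} [Fintype ι] [DecidableEq ι] (p : ι → ℝ) (k : ℕ) : ℝ :=
  ∑ S ∈ Finset.univ.powerset.filter (fun S : Finset ι => S.card = k),
    (∏ i ∈ S, p i) * ∏ i ∈ Sᶜ, (1 - p i)

/-- Mean of a PBD with parameter vector `p`. -/
noncomputable def pbdMean {ι : Type*} [Fintype ι] (p : ι → ℝ) : ℝ := ∑ i, p i

/-- Variance of a PBD with parameter vector `p`. -/
noncomputable def pbdVar {ι : Type*} [Fintype ι] (p : ι → ℝ) : ℝ := ∑ i, p i * (1 - p i)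

/-- Total variation distance between two distributions on ℕ. -/
noncomputable def dTV (P Q : ℕ → ℝ) : ℝ := (1 / 2) * ∑' k : ℕ, |P k - Q k|

/-- Discrete Fourier transform modulo `M` of a distribution on ℕ. -/
noncomputable def dft (P : ℕ → ℝ) (M : ℕ) (ξ : ℤ) : ℂ :=
  ∑' j : ℕ, (P j : ℂ) *
    Complex.exp (-2 * (Real.pi : ℂ) * Complex.I * (ξ : ℂ) * (j : ℂ) / (M : ℂ))


/-! ### Generating function and moments -/

lemma pbdPmf_nonneg {n : ℕ} (p : Fin n → ℝ) (hp : ∀ i, p i ∈ Set.Icc (0 : ℝ) 1) (k : ℕ) :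
    0 ≤ pbdPmf p k := by
  unfold pbdPmf
  refine Finset.sum_nonneg fun S _ => mul_nonneg ?_ ?_
  · exact Finset.prod_nonneg fun i _ => (hp i).1
  · exact Finset.prod_nonneg fun i _ => sub_nonneg.2 (hp i).2

lemma pbdPmf_eq_zero {n : ℕ} (p : Fin n → ℝ) {k : ℕ} (hk : n < k) : pbdPmf p k = 0 := by
  unfold pbdPmf
  refine Finset.sum_eq_zero fun S hS => ?_
  have h1 := (Finset.mem_filter.1 hS).2
  have h2 := S.card_le_univ
  simp at h2
  omega

/-- The probability generating function of a PBD factors over the Bernoulli summands. -/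
lemma pbdPmf_genFun {n N : ℕ} (hN : n < N) (p : Fin n → ℝ) (z : ℂ) :
    ∑ k ∈ Finset.range N, (pbdPmf p k : ℂ) * z ^ k = ∏ i, ((p i : ℂ) * z + (1 - p i)) := by
  rw [Finset.prod_add]
  have h : ∀ S ∈ (Finset.univ : Finset (Fin n)).powerset, S.card ∈ Finset.range N := by
    intro S _
    have := S.card_le_univ
    simp at this
    exact Finset.mem_range.2 (by omega)
  rw [← Finset.sum_fiberwise_of_maps_to h]
  refine Finset.sum_congr rfl fun k _ => ?_
  unfold pbdPmf
  push_cast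
  rw [Finset.sum_mul]
  refine Finset.sum_congr (by congr) fun S hS => ?_
  have hc : S.card = k := (Finset.mem_filter.1 hS).2
  rw [Finset.prod_mul_distrib, Finset.prod_const, hc, ← Finset.compl_eq_univ_sdiff]
  ring

lemma pbdPmf_genFun_real {n N : ℕ} (hN : n < N) (p : Fin n → ℝ) (z : ℝ) :
    ∑ k ∈ Finset.range N, pbdPmf p k * z ^ k = ∏ i, (p i * z + (1 - p i)) := by
  have h := pbdPmf_genFun hN p (z : ℂ)
  exact_mod_cast h

lemma pbdVar_nonneg {n : ℕ} (p : Fin n → ℝ) (hp : ∀ i, p i ∈ Set.Icc (0 : ℝ) 1) :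
    0 ≤ pbdVar p :=
  Finset.sum_nonneg fun i _ => mul_nonneg (hp i).1 (sub_nonneg.2 (hp i).2)

/-- Sub-Gaussian bound on the centred moment generating function, valid for `|t| ≤ 1`
since `e^x ≤ 1 + x + x²` on `[-1, 1]`. -/
lemma pbd_mgf {n N : ℕ} (hN : n < N) (p : Fin n → ℝ) (hp : ∀ i, p i ∈ Set.Icc (0 : ℝ) 1)
    {t : ℝ} (ht : |t| ≤ 1) :
    ∑ k ∈ Finset.range N, pbdPmf p k * Real.exp (t * (k - pbdMean p))
      ≤ Real.exp (t ^ 2 * pbdVar p) := by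
  have e1 : ∀ k : ℕ, Real.exp (t * (k - pbdMean p))
      = Real.exp t ^ k * Real.exp (-(t * pbdMean p)) := by
    intro k
    rw [← Real.exp_nat_mul, ← Real.exp_add]
    congr 1
    ring
  simp_rw [e1, ← mul_assoc]
  rw [← Finset.sum_mul, pbdPmf_genFun_real hN, pbdMean, pbdVar, Finset.mul_sum, Finset.mul_sum,
    ← Finset.sum_neg_distrib, Real.exp_sum, Real.exp_sum, ← Finset.prod_mul_distrib]
  refine Finset.prod_le_prod (fun i _ => ?_) (fun i _ => ?_)
  · have := (hp i).1
    have := sub_nonneg.2 (hp i).2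
    positivity
  · obtain ⟨h0, h1⟩ := hp i
    set x := p i
    have ha : |t * (1 - x)| ≤ 1 := by
      rw [abs_mul, abs_of_nonneg (sub_nonneg.2 h1)]
      nlinarith [abs_nonneg t]
    have hb : |-(t * x)| ≤ 1 := by
      rw [abs_neg, abs_mul, abs_of_nonneg h0]
      nlinarith [abs_nonneg t]
    have ea := (abs_le.1 (Real.abs_exp_sub_one_sub_id_le ha)).2
    have eb := (abs_le.1 (Real.abs_exp_sub_one_sub_id_le hb)).2
    have ec : Real.exp t * Real.exp (-(t * x)) = Real.exp (t * (1 - x)) := by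
      rw [← Real.exp_add]
      congr 1
      ring
    have ed := Real.add_one_le_exp (t ^ 2 * (x * (1 - x)))
    have m1 := mul_le_mul_of_nonneg_left ea h0
    have m2 := mul_le_mul_of_nonneg_left eb (sub_nonneg.2 h1)
    calc (x * Real.exp t + (1 - x)) * Real.exp (-(t * x))
        = x * Real.exp (t * (1 - x)) + (1 - x) * Real.exp (-(t * x)) := by rw [← ec]; ring
      _ ≤ t ^ 2 * (x * (1 - x)) + 1 := by nlinarith
      _ ≤ _ := ed

/-- Chernoff bound for the two-sided tail of a PBD around a point `m`. -/
lemma pbd_tail {n N : ℕ} (hN : n < N) (p : Fin n → ℝ) (hp : ∀ i, p i ∈ Set.Icc (0 : ℝ) 1)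
    {t s m : ℝ} (ht0 : 0 ≤ t) (ht : t ≤ 1) :
    ∑ k ∈ (Finset.range N).filter (fun k : ℕ => ¬ |(k : ℝ) - m| < s), pbdPmf p k
      ≤ 2 * Real.exp (t ^ 2 * pbdVar p + t * |m - pbdMean p| - t * s) := by
  have h1 := pbd_mgf hN p hp (t := t) (by rwa [abs_of_nonneg ht0])
  have h2 := pbd_mgf hN p hp (t := -t) (by rwa [abs_neg, abs_of_nonneg ht0])
  rw [neg_sq] at h2
  set μ := pbdMean p
  set C := Real.exp (t * |m - μ| - t * s) with hC
  have key : ∀ k : ℕ, ¬ |(k : ℝ) - m| < s →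
      1 ≤ (Real.exp (t * (k - μ)) + Real.exp (-t * (k - μ))) * C := by
    intro k hk
    rw [not_lt] at hk
    have hs : s ≤ |(k : ℝ) - μ| + |m - μ| := by
      refine hk.trans ?_
      have := abs_sub_le (k : ℝ) μ m
      rwa [abs_sub_comm μ m] at this
    have e : Real.exp (t * |(k : ℝ) - μ|)
        ≤ Real.exp (t * (k - μ)) + Real.exp (-t * (k - μ)) := by
      rcases abs_cases ((k : ℝ) - μ) with ⟨h, _⟩ | ⟨h, _⟩
      · rw [h]
        linarith [Real.exp_pos (-t * (k - μ))]
      · rw [h, mul_neg, ← neg_mul]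
        linarith [Real.exp_pos (t * (k - μ))]
    calc (1 : ℝ) ≤ Real.exp (t * |(k : ℝ) - μ|) * C := by
          rw [hC, ← Real.exp_add]
          exact Real.one_le_exp (by nlinarith)
      _ ≤ _ := mul_le_mul_of_nonneg_right e (Real.exp_pos _).le
  calc _ ≤ ∑ k ∈ (Finset.range N).filter (fun k : ℕ => ¬ |(k : ℝ) - m| < s),
        pbdPmf p k * ((Real.exp (t * (k - μ)) + Real.exp (-t * (k - μ))) * C) := by
        refine Finset.sum_le_sum fun k hk => ?_
        exact le_mul_of_one_le_right (pbdPmf_nonneg p hp k) (key k (Finset.mem_filter.1 hk).2)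
    _ ≤ ∑ k ∈ Finset.range N,
        pbdPmf p k * ((Real.exp (t * (k - μ)) + Real.exp (-t * (k - μ))) * C) := by
        refine Finset.sum_le_sum_of_subset_of_nonneg (Finset.filter_subset _ _) fun k _ _ => ?_
        have := pbdPmf_nonneg p hp k
        positivity
    _ = ((∑ k ∈ Finset.range N, pbdPmf p k * Real.exp (t * (k - μ)))
        + ∑ k ∈ Finset.range N, pbdPmf p k * Real.exp (-t * (k - μ))) * C := by
        rw [← Finset.sum_add_distrib, Finset.sum_mul]
        exact Finset.sum_congr rfl fun k _ => by ring
    _ ≤ (2 * Real.exp (t ^ 2 * pbdVar p)) * C :=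
        mul_le_mul_of_nonneg_right (by linarith) (Real.exp_pos _).le
    _ = _ := by
        rw [mul_assoc, hC, ← Real.exp_add]
        congr 2
        ring

/-! ### Fourier transform -/

lemma dft_pbd_eq_sum {n N : ℕ} (hN : n < N) (p : Fin n → ℝ) (M : ℕ) (ξ : ℤ) :
    dft (pbdPmf p) M ξ = ∑ j ∈ Finset.range N, (pbdPmf p j : ℂ) *
      Complex.exp (-2 * (Real.pi : ℂ) * Complex.I * (ξ : ℂ) * (j : ℂ) / (M : ℂ)) := by
  unfold dft
  refine tsum_eq_sum fun j hj => ?_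
  rw [Finset.mem_range, not_lt] at hj
  rw [pbdPmf_eq_zero p (by omega)]
  simp

/-- Gaussian decay of the Fourier transform of a PBD, on frequencies in `[-M/2, M/2]`. -/
lemma norm_sq_dft_pbd_le {n : ℕ} (p : Fin n → ℝ) (hp : ∀ i, p i ∈ Set.Icc (0 : ℝ) 1)
    {M : ℕ} (hM : 0 < M) (ξ : ℤ) (hξ : 2 * |(ξ : ℝ)| ≤ M) :
    ‖dft (pbdPmf p) M ξ‖ ^ 2 ≤ Real.exp (-(16 * pbdVar p * (ξ : ℝ) ^ 2 / (M : ℝ) ^ 2)) := by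
  have hM' : (0 : ℝ) < M := by exact_mod_cast hM
  set θ : ℝ := -2 * Real.pi * ξ / M with hθ
  have hθabs : |θ| ≤ Real.pi := by
    rw [hθ, abs_div, abs_mul, abs_mul, abs_of_pos hM', abs_of_pos Real.pi_pos, div_le_iff₀ hM']
    have : |(-2 : ℝ)| = 2 := by norm_num
    rw [this]
    nlinarith [Real.pi_pos]
  have hcos := Real.cos_le_one_sub_mul_cos_sq hθabs
  have hcos' : Real.cos θ ≤ 1 - 8 * (ξ : ℝ) ^ 2 / (M : ℝ) ^ 2 := by
    refine hcos.trans (le_of_eq ?_)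
    rw [hθ]
    have := Real.pi_pos.ne'
    field_simp
    ring
  have hprod : dft (pbdPmf p) M ξ
      = ∏ i, ((p i : ℂ) * Complex.exp (θ * Complex.I) + (1 - p i)) := by
    rw [dft_pbd_eq_sum (Nat.lt_succ_self n), ← pbdPmf_genFun (Nat.lt_succ_self n)]
    refine Finset.sum_congr rfl fun j _ => ?_
    rw [← Complex.exp_nat_mul, hθ]
    congr 2
    push_cast
    ring
  rw [hprod, norm_prod, ← Finset.prod_pow, pbdVar, mul_right_comm, mul_comm _ (∑ i, _),
    mul_div_assoc, Finset.sum_mul, ← Finset.sum_neg_distrib, Real.exp_sum]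
  refine Finset.prod_le_prod (fun i _ => by positivity) fun i _ => ?_
  obtain ⟨h0, h1⟩ := hp i
  set x := p i
  have hn : ‖(x : ℂ) * Complex.exp (θ * Complex.I) + (1 - x)‖ ^ 2
      = 1 - 2 * (x * (1 - x)) * (1 - Real.cos θ) := by
    rw [← Complex.normSq_eq_norm_sq, Complex.normSq_apply]
    simp only [Complex.add_re, Complex.add_im, Complex.sub_re, Complex.sub_im, Complex.one_re,
      Complex.one_im, Complex.ofReal_re, Complex.ofReal_im, Complex.re_ofReal_mul,
      Complex.im_ofReal_mul, Complex.exp_ofReal_mul_I_re, Complex.exp_ofReal_mul_I_im]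
    linear_combination x ^ 2 * Real.sin_sq_add_cos_sq θ
  rw [hn]
  have hx : 0 ≤ x * (1 - x) := mul_nonneg h0 (sub_nonneg.2 h1)
  have e := Real.add_one_le_exp (-(x * (1 - x) * (16 * (ξ : ℝ) ^ 2 / (M : ℝ) ^ 2)))
  refine le_trans ?_ e
  have e2 : 16 * (ξ : ℝ) ^ 2 / (M : ℝ) ^ 2 = 2 * (8 * (ξ : ℝ) ^ 2 / (M : ℝ) ^ 2) := by ring
  rw [e2]
  nlinarith [mul_le_mul_of_nonneg_left hcos' hx]

open scoped ZMod ComplexConjugate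

/-- Parseval's identity for the discrete Fourier transform on `ZMod M`. -/
lemma zmod_parseval {M : ℕ} [NeZero M] (f : ZMod M → ℂ) :
    ∑ k, ‖ZMod.dft f k‖ ^ 2 = M * ∑ j, ‖f j‖ ^ 2 := by
  have h : ∑ k, conj (ZMod.dft f k) * ZMod.dft f k = M * ∑ j, conj (f j) * f j := by
    calc ∑ k, conj (ZMod.dft f k) * ZMod.dft f k
        = ∑ k, ∑ j, conj (f j) * (ZMod.stdAddChar (j * k) * ZMod.dft f k) := by
          refine Finset.sum_congr rfl fun k _ => ?_
          conv_lhs => rw [ZMod.dft_apply f k]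
          rw [map_sum, Finset.sum_mul]
          refine Finset.sum_congr rfl fun j _ => ?_
          rw [smul_eq_mul, map_mul, ← AddChar.map_neg_eq_conj, neg_neg, ZMod.dft_apply]
          ring
      _ = ∑ j, conj (f j) * ZMod.dft (ZMod.dft f) (-j) := by
          rw [Finset.sum_comm]
          refine Finset.sum_congr rfl fun j _ => ?_
          rw [← Finset.mul_sum, ZMod.dft_apply (ZMod.dft f)]
          congr 1
          refine Finset.sum_congr rfl fun k _ => ?_
          rw [smul_eq_mul, mul_neg, neg_neg, mul_comm k j]
      _ = _ := by
          rw [ZMod.dft_dft, Finset.mul_sum]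
          refine Finset.sum_congr rfl fun j _ => ?_
          simp only [neg_neg, smul_eq_mul]
          ring
  simp_rw [Complex.conj_mul'] at h
  exact_mod_cast h

/-! ### Reduction modulo `M` -/

/-- If the points satisfying `S` have distinct residues modulo `M`, then the `ℓ¹` norm of `d` is
controlled by that of its reduction modulo `M` and the mass of `d` outside `S`. -/
lemma l1_le_fold (d : ℕ → ℝ) (N M : ℕ) [NeZero M] (S : ℕ → Prop)
    (hS : ∀ i j, S i → S j → (i : ZMod M) = j → i = j) :
    ∑ k ∈ Finset.range N, |d k| ≤
      (∑ r : ZMod M, |∑ j ∈ Finset.range N with ((j : ℕ) : ZMod M) = r, d j|)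
        + 2 * ∑ j ∈ Finset.range N with ¬ S j, |d j| := by
  have hfib : ∀ r : ZMod M,
      ∑ k ∈ (Finset.range N).filter S with ((k : ℕ) : ZMod M) = r, |d k| ≤
        |∑ j ∈ Finset.range N with ((j : ℕ) : ZMod M) = r, d j|
          + ∑ j ∈ (Finset.range N).filter (fun j => ¬ S j) with ((j : ℕ) : ZMod M) = r, |d j| := by
    intro r
    have h1 : ∑ k ∈ (Finset.range N).filter S with ((k : ℕ) : ZMod M) = r, |d k|
        = |∑ k ∈ (Finset.range N).filter S with ((k : ℕ) : ZMod M) = r, d k| := by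
      have hc : (((Finset.range N).filter S).filter (fun k : ℕ => (k : ZMod M) = r)).card ≤ 1 := by
        rw [Finset.card_le_one]
        intro a ha b hb
        simp only [Finset.mem_filter] at ha hb
        exact hS a b ha.1.2 hb.1.2 (ha.2.trans hb.2.symm)
      rcases Finset.card_le_one_iff_subset_singleton.1 hc with ⟨x, hx⟩
      rcases Finset.subset_singleton_iff.1 hx with h | h <;> rw [h] <;> simp
    have h2 : ∑ j ∈ Finset.range N with ((j : ℕ) : ZMod M) = r, d j
        = (∑ k ∈ (Finset.range N).filter S with ((k : ℕ) : ZMod M) = r, d k)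
          + ∑ j ∈ (Finset.range N).filter (fun j => ¬ S j) with ((j : ℕ) : ZMod M) = r, d j := by
      rw [← Finset.sum_filter_add_sum_filter_not _ S]
      congr 1 <;> refine Finset.sum_congr ?_ (fun _ _ => rfl) <;> ext x <;>
        simp only [Finset.mem_filter] <;> tauto
    rw [h1]
    have h3 := Finset.abs_sum_le_sum_abs d
      (((Finset.range N).filter (fun j => ¬ S j)).filter (fun j : ℕ => (j : ZMod M) = r))
    rw [h2]
    have h4 := abs_sub_abs_le_abs_add
      (∑ k ∈ (Finset.range N).filter S with ((k : ℕ) : ZMod M) = r, d k)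
      (∑ j ∈ (Finset.range N).filter (fun j => ¬ S j) with ((j : ℕ) : ZMod M) = r, d j)
    linarith
  have hsum := Finset.sum_le_sum fun (r : ZMod M) (_ : r ∈ Finset.univ) => hfib r
  rw [Finset.sum_add_distrib, Finset.sum_fiberwise, Finset.sum_fiberwise] at hsum
  rw [← Finset.sum_filter_add_sum_filter_not _ S]
  linarith

/-- The transform over `ZMod M` of the reduction of `d` modulo `M`, evaluated at an integer
frequency. -/
lemma zmod_dft_fold (d : ℕ → ℝ) (N M : ℕ) [NeZero M] (ξ : ℤ) :
    ZMod.dft (fun r : ZMod M =>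
        ((∑ j ∈ Finset.range N with ((j : ℕ) : ZMod M) = r, d j : ℝ) : ℂ)) (ξ : ZMod M)
      = ∑ j ∈ Finset.range N, (d j : ℂ) *
        Complex.exp (-2 * (Real.pi : ℂ) * Complex.I * (ξ : ℂ) * (j : ℂ) / (M : ℂ)) := by
  rw [ZMod.dft_apply, ← Finset.sum_fiberwise (Finset.range N) (fun j : ℕ => (j : ZMod M))]
  refine Finset.sum_congr rfl fun r _ => ?_
  rw [smul_eq_mul, Complex.ofReal_sum, Finset.mul_sum]
  refine Finset.sum_congr rfl fun j hj => ?_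
  rw [← (Finset.mem_filter.1 hj).2]
  have h := ZMod.stdAddChar_coe (N := M) (-((j : ℤ) * ξ))
  push_cast at h
  rw [h, mul_comm]
  congr 2
  ring

/-- The `ℓ¹` norm of the reduction modulo `M` is at most the `ℓ²` norm of its (unnormalised)
Fourier transform. -/
lemma sq_fold_le (d : ℕ → ℝ) (N M : ℕ) [NeZero M] (G : ℤ → ℂ)
    (hG : ∀ ξ, G ξ = ∑ j ∈ Finset.range N, (d j : ℂ) *
        Complex.exp (-2 * (Real.pi : ℂ) * Complex.I * (ξ : ℂ) * (j : ℂ) / (M : ℂ))) :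
    (∑ r : ZMod M, |∑ j ∈ Finset.range N with ((j : ℕ) : ZMod M) = r, d j|) ^ 2
      ≤ ∑ ξ : ZMod M, ‖G ξ.valMinAbs‖ ^ 2 := by
  have h1 := sq_sum_le_card_mul_sum_sq (s := (Finset.univ : Finset (ZMod M)))
    (f := fun r => |∑ j ∈ Finset.range N with ((j : ℕ) : ZMod M) = r, d j|)
  refine h1.trans (le_of_eq ?_)
  have h2 := zmod_parseval (fun r : ZMod M =>
        ((∑ j ∈ Finset.range N with ((j : ℕ) : ZMod M) = r, d j : ℝ) : ℂ))
  rw [Finset.card_univ, ZMod.card]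
  simp only [Complex.norm_real, Real.norm_eq_abs] at h2
  rw [← h2]
  refine Finset.sum_congr rfl fun ξ _ => ?_
  rw [hG, ← zmod_dft_fold, ZMod.coe_valMinAbs]

lemma sum_half_pow_natAbs_le (T : Finset ℤ) : ∑ z ∈ T, (1 / 2 : ℝ) ^ z.natAbs ≤ 4 := by
  rw [← Finset.sum_fiberwise_of_maps_to (fun z hz => Finset.mem_image_of_mem Int.natAbs hz)]
  have h : ∀ k ∈ T.image Int.natAbs,
      ∑ z ∈ T with z.natAbs = k, (1 / 2 : ℝ) ^ z.natAbs ≤ 2 * (1 / 2 : ℝ) ^ k := by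
    intro k _
    have hc : (T.filter (fun z => z.natAbs = k)).card ≤ 2 := by
      refine (Finset.card_le_card (t := {(k : ℤ), -(k : ℤ)}) ?_).trans Finset.card_le_two
      intro z hz
      have := (Finset.mem_filter.1 hz).2
      simp only [Finset.mem_insert, Finset.mem_singleton]
      omega
    rw [Finset.sum_congr rfl fun z hz => by rw [(Finset.mem_filter.1 hz).2], Finset.sum_const,
      nsmul_eq_mul]
    exact mul_le_mul_of_nonneg_right (by exact_mod_cast hc) (by positivity)
  refine (Finset.sum_le_sum h).trans ?_
  rw [← Finset.mul_sum]
  have := summable_geometric_two.sum_le_tsum (T.image Int.natAbs) (fun k _ => by positivity)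
  rw [tsum_geometric_two] at this
  linarith

/-- Splitting of the full frequency sum into the frequencies in `[-l, l]` and an exponentially
decaying remainder. -/
lemma freq_sum_le (G : ℤ → ℝ) (hG : ∀ z, 0 ≤ G z) (M l : ℕ) [NeZero M] (c : ℝ) (hc : 0 ≤ c)
    (hhigh : ∀ z : ℤ, l < z.natAbs → 2 * z.natAbs ≤ M → G z ≤ c * (1 / 2) ^ z.natAbs) :
    ∑ ξ : ZMod M, G ξ.valMinAbs ≤ (∑ z ∈ Finset.Icc (-(l : ℤ)) l, G z) + 4 * c := by
  set T : Finset ℤ := Finset.univ.image (fun ξ : ZMod M => ξ.valMinAbs) with hT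
  have e : ∑ ξ : ZMod M, G ξ.valMinAbs = ∑ z ∈ T, G z := by
    rw [hT, Finset.sum_image fun a _ b _ h => ZMod.injective_valMinAbs h]
  rw [e, ← Finset.sum_filter_add_sum_filter_not T (fun z => z ∈ Finset.Icc (-(l : ℤ)) l)]
  refine add_le_add ?_ ?_
  · refine Finset.sum_le_sum_of_subset_of_nonneg (fun z hz => (Finset.mem_filter.1 hz).2) ?_
    exact fun z _ _ => hG z
  · have h : ∀ z ∈ T.filter (fun z => ¬ z ∈ Finset.Icc (-(l : ℤ)) l),
        G z ≤ c * (1 / 2) ^ z.natAbs := by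
      intro z hz
      obtain ⟨hz1, hz2⟩ := Finset.mem_filter.1 hz
      obtain ⟨ξ, _, rfl⟩ := Finset.mem_image.1 hz1
      rw [Finset.mem_Icc] at hz2
      have := ZMod.natAbs_valMinAbs_le ξ
      exact hhigh _ (by omega) (by omega)
    refine (Finset.sum_le_sum h).trans ?_
    rw [← Finset.mul_sum]
    nlinarith [sum_half_pow_natAbs_le (T.filter (fun z => ¬ z ∈ Finset.Icc (-(l : ℤ)) l))]

/-! ### Choice of scales -/

/-- With `D = √(L (V + L))`, a PBD of variance at most `2A (V + L)` and mean within `2A D` of `m`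
has mass at most `2 e^{-6L}` outside the window of radius `(4A + 6) D` around `m`; the Chernoff
parameter is `t = L / D`. This applies to both `P` and `Q` with `m = E[P]`. -/
lemma pbd_window_tail {n N : ℕ} (hN : n < N) (p : Fin n → ℝ) (hp : ∀ i, p i ∈ Set.Icc (0 : ℝ) 1)
    {A V L D m : ℝ} (hV : 0 ≤ V) (hL : 0 < L) (hD : 0 < D)
    (hD2 : D ^ 2 = L * (V + L)) (hvar : pbdVar p ≤ 2 * A * (V + L))
    (hm : |m - pbdMean p| ≤ 2 * A * D) :
    ∑ k ∈ (Finset.range N).filter (fun k : ℕ => ¬ |(k : ℝ) - m| < (4 * A + 6) * D), pbdPmf p k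
      ≤ 2 * Real.exp (-(6 * L)) := by
  have hLD : L ≤ D := by nlinarith
  have htD : L / D * D = L := div_mul_cancel₀ _ hD.ne'
  have ht2 : (L / D) ^ 2 * (V + L) = L := by
    rw [div_pow, hD2]
    have : V + L ≠ 0 := by positivity
    field_simp
  have ht0 : 0 ≤ L / D := by positivity
  refine (pbd_tail hN p hp (t := L / D) (s := (4 * A + 6) * D) (m := m) ht0
    ((div_le_one hD).2 hLD)).trans ?_
  have e1 : (L / D) ^ 2 * pbdVar p ≤ 2 * A * L := by
    calc _ ≤ (L / D) ^ 2 * (2 * A * (V + L)) := mul_le_mul_of_nonneg_left hvar (by positivity)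
      _ = 2 * A * ((L / D) ^ 2 * (V + L)) := by ring
      _ = _ := by rw [ht2]
  have e2 : L / D * |m - pbdMean p| ≤ 2 * A * L := by
    calc _ ≤ L / D * (2 * A * D) := mul_le_mul_of_nonneg_left hm ht0
      _ = 2 * A * (L / D * D) := by ring
      _ = _ := by rw [htD]
  have e3 : L / D * ((4 * A + 6) * D) = (4 * A + 6) * L := by
    rw [← htD]
    field_simp
  gcongr
  rw [e3]
  linarith

/-- At frequencies `|z| > c₂ L` with `c₂ = 14 A c₁²`, the Gaussian exponent of a PBD of variance
at least `V / (2A)` beats `7 |z|`. -/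
lemma high_freq_exponent {A c V W L M x : ℝ} (hA : 1 ≤ A) (hV : 0 ≤ V) (hM : 0 < M)
    (hM2 : M ^ 2 ≤ 16 * c ^ 2 * (V * L)) (hW : V ≤ 2 * A * W) (hx0 : 0 ≤ x)
    (hx : 14 * A * c ^ 2 * L ≤ x) :
    7 * x ≤ 16 * W * x ^ 2 / M ^ 2 := by
  rw [le_div_iff₀ (by positivity)]
  have h1 : 7 * A * (x * M ^ 2) ≤ 8 * V * (x * x) := by
    calc 7 * A * (x * M ^ 2) ≤ 7 * A * (x * (16 * c ^ 2 * (V * L))) := by gcongr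
      _ = 8 * V * (x * (14 * A * c ^ 2 * L)) := by ring
      _ ≤ 8 * V * (x * x) := by gcongr
  have h2 : 8 * V * (x * x) ≤ 8 * (2 * A * W) * (x * x) := by gcongr
  have h3 : A * (7 * x * M ^ 2) ≤ A * (16 * W * x ^ 2) := by nlinarith
  exact le_of_mul_le_mul_left h3 (by linarith)

/-- Decay of the difference of transforms at a high frequency. -/
lemma high_freq_bound {n n' : ℕ} (p : Fin n → ℝ) (q : Fin n' → ℝ)
    (hp : ∀ i, p i ∈ Set.Icc (0 : ℝ) 1) (hq : ∀ i, q i ∈ Set.Icc (0 : ℝ) 1)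
    {M : ℕ} (hM : 0 < M) (z : ℤ) {L : ℝ} (hz : 2 * z.natAbs ≤ M) (hLz : L ≤ z.natAbs)
    (h1 : 7 * (z.natAbs : ℝ) ≤ 16 * pbdVar p * (z.natAbs : ℝ) ^ 2 / (M : ℝ) ^ 2)
    (h2 : 7 * (z.natAbs : ℝ) ≤ 16 * pbdVar q * (z.natAbs : ℝ) ^ 2 / (M : ℝ) ^ 2) :
    ‖dft (pbdPmf p) M z - dft (pbdPmf q) M z‖ ^ 2
      ≤ 4 * Real.exp (-(6 * L)) * (1 / 2) ^ z.natAbs := by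
  have hcast : (z.natAbs : ℝ) = |(z : ℝ)| := by
    rw [Nat.cast_natAbs, Int.cast_abs]
  have hz' : 2 * |(z : ℝ)| ≤ M := by
    rw [← hcast]
    exact_mod_cast hz
  have b1 := norm_sq_dft_pbd_le p hp hM z hz'
  have b2 := norm_sq_dft_pbd_le q hq hM z hz'
  have hsq : (z : ℝ) ^ 2 = (z.natAbs : ℝ) ^ 2 := by rw [hcast, sq_abs]
  rw [hsq] at b1 b2
  set x : ℝ := (z.natAbs : ℝ) with hx
  have c1 := b1.trans (Real.exp_le_exp.2 (neg_le_neg h1))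
  have c2 := b2.trans (Real.exp_le_exp.2 (neg_le_neg h2))
  have hn := norm_sub_le (dft (pbdPmf p) M z) (dft (pbdPmf q) M z)
  have hhalf : Real.exp (-x) ≤ (1 / 2) ^ z.natAbs := by
    have e : Real.exp (-1) ≤ 1 / 2 := by
      have := Real.exp_one_gt_d9
      rw [Real.exp_neg, inv_le_comm₀ (Real.exp_pos _) (by norm_num)]
      linarith
    have e2 : Real.exp (-x) = Real.exp (-1) ^ z.natAbs := by
      rw [← Real.exp_nat_mul]
      congr 1
      ring
    rw [e2]
    gcongr
  have hsplit : Real.exp (-(7 * x)) ≤ Real.exp (-(6 * L)) * Real.exp (-x) := by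
    rw [← Real.exp_add]
    exact Real.exp_le_exp.2 (by linarith)
  have hfin : Real.exp (-(7 * x)) ≤ Real.exp (-(6 * L)) * (1 / 2) ^ z.natAbs :=
    hsplit.trans (mul_le_mul_of_nonneg_left hhalf (Real.exp_pos _).le)
  have hsq2 : ‖dft (pbdPmf p) M z - dft (pbdPmf q) M z‖ ^ 2
      ≤ (‖dft (pbdPmf p) M z‖ + ‖dft (pbdPmf q) M z‖) ^ 2 :=
    pow_le_pow_left₀ (norm_nonneg _) hn 2
  nlinarith [sq_nonneg (‖dft (pbdPmf p) M z‖ - ‖dft (pbdPmf q) M z‖)]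

lemma dTV_pbd_eq {n n' N : ℕ} (hn : n < N) (hn' : n' < N) (p : Fin n → ℝ) (q : Fin n' → ℝ) :
    dTV (pbdPmf p) (pbdPmf q) = 1 / 2 * ∑ k ∈ Finset.range N, |pbdPmf p k - pbdPmf q k| := by
  unfold dTV
  rw [tsum_eq_sum (s := Finset.range N)]
  intro k hk
  rw [Finset.mem_range, not_lt] at hk
  rw [pbdPmf_eq_zero p (by omega), pbdPmf_eq_zero q (by omega)]
  simp

/-- Integers in an open window of radius `s ≤ M / 2` are determined by their residue
modulo `M`. -/
lemma window_injective {M : ℕ} {m s : ℝ} (hs : 2 * s ≤ M) (i j : ℕ)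
    (hi : |(i : ℝ) - m| < s) (hj : |(j : ℝ) - m| < s) (hij : (i : ZMod M) = j) : i = j := by
  have hdvd : (M : ℤ) ∣ (i : ℤ) - j := by
    rw [← ZMod.intCast_zmod_eq_zero_iff_dvd]
    push_cast
    rw [hij, sub_self]
  have habs : |(i : ℤ) - j| < M := by
    have : |(i : ℝ) - j| < M := by
      rw [abs_lt] at hi hj ⊢
      constructor <;> linarith
    exact_mod_cast this
  have := Int.eq_zero_of_abs_lt_dvd hdvd habs
  omega

/-- A frequency `x ∈ (l, M / 2]` can exist only when `V ≥ 4 A L` (otherwise `M ≤ 2 l`), and in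
that regime `M` is of order `√(V L)`. -/
lemma high_freq_regime {A c V L R M x : ℝ} (hA : 1 ≤ A) (hc : 1 ≤ c) (hAc : 1 ≤ A * c ^ 2)
    (hL : 0.69 < L) (hR0 : 0 ≤ R) (hR2 : R ^ 2 = V * L) (hM0 : 0 ≤ M)
    (hM : M < c * (L + R) + 1) (hx : 14 * A * c ^ 2 * L ≤ x) (hxM : 2 * x ≤ M) :
    4 * A * L ≤ V ∧ M ^ 2 ≤ 16 * c ^ 2 * (V * L) := by
  have hL0 : 0 < L := by linarith
  have hVbig : 4 * A * L ≤ V := by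
    by_contra hcon
    push Not at hcon
    have hsq : R ^ 2 ≤ (2 * A * L) ^ 2 := by
      have h1 : V * L ≤ 4 * A * L * L := mul_le_mul_of_nonneg_right hcon.le hL0.le
      have h2 : 1 * (A * L * L) ≤ A * (A * L * L) :=
        mul_le_mul_of_nonneg_right hA (by positivity)
      rw [hR2]
      linarith
    have hR' : R ≤ 2 * A * L := (abs_le_of_sq_le_sq' hsq (by positivity)).2
    have h3 : c * (L + R) ≤ 3 * (A * c ^ 2) * L := by
      have hAL : 1 * L ≤ A * L := mul_le_mul_of_nonneg_right hA hL0.le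
      calc c * (L + R) ≤ c * (A * L + 2 * A * L) :=
            mul_le_mul_of_nonneg_left (by linarith) (by linarith)
        _ = 3 * (A * L) * (c * 1) := by ring
        _ ≤ 3 * (A * L) * (c * c) := by gcongr
        _ = 3 * (A * c ^ 2) * L := by ring
    have h4 : 1 * L ≤ A * c ^ 2 * L := mul_le_mul_of_nonneg_right hAc hL0.le
    linarith
  refine ⟨hVbig, ?_⟩
  have hLV : L ≤ V := by
    have hAL : 1 * L ≤ A * L := mul_le_mul_of_nonneg_right hA hL0.le
    linarith
  have hLR : L ≤ R := by
    refine (abs_le_of_sq_le_sq' ?_ hR0).2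
    rw [hR2, sq]
    exact mul_le_mul_of_nonneg_right hLV hL0.le
  have hM4 : M ≤ 4 * c * R := by
    have h1 : c * L ≤ c * R := mul_le_mul_of_nonneg_left hLR (by linarith)
    have h2 : 1 * R ≤ c * R := mul_le_mul_of_nonneg_right hc hR0
    linarith
  rw [← hR2]
  calc M ^ 2 ≤ (4 * c * R) ^ 2 := by gcongr
    _ = _ := by ring

set_option maxHeartbeats 1000000 in
/-- Fourier closeness on low frequencies implies total variation closeness for PBDs with
comparable means and variances. -/
theorem fourier_closeness_implies_tv_closeness (A : ℝ) (hA : 1 ≤ A) :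
    ∃ c₁ c₂ : ℝ, 1 ≤ c₁ ∧ 1 ≤ c₂ ∧
      ∀ ε : ℝ, 0 < ε → ε < 1 / 2 →
        ∀ n n' : ℕ, ∀ p : Fin n → ℝ, ∀ q : Fin n' → ℝ,
          (∀ i, p i ∈ Set.Icc (0 : ℝ) 1) → (∀ i, q i ∈ Set.Icc (0 : ℝ) 1) →
          |pbdMean p - pbdMean q| ≤ A * Real.sqrt (pbdVar p + 1) →
          (pbdVar q + 1) / A ≤ pbdVar p + 1 →
          pbdVar p + 1 ≤ A * (pbdVar q + 1) →
          ∀ M l : ℕ,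
            M = ⌈c₁ * (Real.log (1 / ε) + Real.sqrt (pbdVar p * Real.log (1 / ε)))⌉₊ →
            l = ⌈c₂ * Real.log (1 / ε)⌉₊ →
            (∑ ξ ∈ Finset.Icc (-(l : ℤ)) (l : ℤ),
                ‖dft (pbdPmf p) M ξ - dft (pbdPmf q) M ξ‖ ^ 2) ≤ ε ^ 2 / 16 →
            dTV (pbdPmf p) (pbdPmf q) ≤ ε := by
  -- `c₁ = 8A + 12` makes the window of radius `(4A + 6) D` fit in one period, and
  -- `c₂ = 14 A c₁²` is the threshold of `high_freq_exponent`.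
  set c : ℝ := 8 * A + 12 with hc
  have hc1 : 1 ≤ c := by linarith
  have hAc : 1 ≤ A * c ^ 2 := by nlinarith [sq_nonneg (c - 1)]
  refine ⟨c, 14 * A * c ^ 2, hc1, by linarith, ?_⟩
  intro ε hε hε2 n n' p q hp hq hmean hvarq hvar M l hM hl hlow
  set L := Real.log (1 / ε) with hLdef
  set V := pbdVar p with hVdef
  have hV : 0 ≤ V := pbdVar_nonneg p hp
  have hexpL : Real.exp (-L) = ε := by
    rw [hLdef, one_div, Real.log_inv, neg_neg, Real.exp_log hε]
  have hL69 : 0.69 < L := by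
    have h2 : Real.log 2 ≤ L := Real.log_le_log (by norm_num) (by
      rw [le_div_iff₀ hε]
      linarith)
    have := Real.log_two_gt_d9
    linarith
  have hL : 0 < L := by linarith
  have he6 : Real.exp (-(6 * L)) = ε ^ 6 := by
    rw [← hexpL, ← Real.exp_nat_mul]
    congr 1
    push_cast
    ring
  have hε4 : ε ^ 4 ≤ 1 / 16 := by
    have := pow_le_pow_left₀ hε.le hε2.le 4
    norm_num at this ⊢
    exact this
  have hε6 : ε ^ 6 ≤ ε ^ 2 / 16 := by nlinarith [sq_nonneg ε]
  have hVL : 0 ≤ V * L := by positivity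
  set R := Real.sqrt (V * L) with hR
  have hR0 : 0 ≤ R := Real.sqrt_nonneg _
  have hR2 : R ^ 2 = V * L := Real.sq_sqrt hVL
  set D := Real.sqrt (L * (V + L)) with hDdef
  have hD2 : D ^ 2 = L * (V + L) := Real.sq_sqrt (by positivity)
  have hD : 0 < D := Real.sqrt_pos.2 (by positivity)
  have hDR : D ≤ L + R := abs_le_of_sq_le_sq' (by nlinarith) (by positivity) |>.2
  have hMlow : c * (L + R) ≤ M := by
    rw [hM]
    exact Nat.le_ceil _
  have hMup : (M : ℝ) < c * (L + R) + 1 := by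
    rw [hM]
    exact Nat.ceil_lt_add_one (by positivity)
  have hllow : 14 * A * c ^ 2 * L ≤ l := by
    rw [hl]
    exact Nat.le_ceil _
  have hMpos : 0 < M := by
    have : (0 : ℝ) < M := lt_of_lt_of_le (by positivity) hMlow
    exact_mod_cast this
  have : NeZero M := ⟨hMpos.ne'⟩
  set N := max n n' + 1 with hN
  have hn : n < N := by omega
  have hn' : n' < N := by omega
  have hvp : V ≤ 2 * A * (V + L) := by nlinarith
  have hvq : pbdVar q ≤ 2 * A * (V + L) := by
    have h := hvarq
    rw [div_le_iff₀ (by linarith)] at h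
    nlinarith
  have hmq : |pbdMean p - pbdMean q| ≤ 2 * A * D := by
    have h : Real.sqrt (V + 1) ≤ 2 * D := by
      rw [Real.sqrt_le_left (by positivity)]
      nlinarith
    nlinarith
  have tp := pbd_window_tail hn p hp (A := A) (m := pbdMean p) hV hL hD hD2 hvp
    (by rw [sub_self, abs_zero]; positivity)
  have tq := pbd_window_tail hn' q hq (A := A) (m := pbdMean p) hV hL hD hD2 hvq hmq
  rw [he6] at tp tq
  have hhigh : ∀ z : ℤ, l < z.natAbs → 2 * z.natAbs ≤ M →
      ‖dft (pbdPmf p) M z - dft (pbdPmf q) M z‖ ^ 2 ≤ (4 * ε ^ 6) * (1 / 2) ^ z.natAbs := by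
    intro z hz1 hz2
    have hzl : (l : ℝ) < z.natAbs := by exact_mod_cast hz1
    have hzM : 2 * (z.natAbs : ℝ) ≤ M := by exact_mod_cast hz2
    have hMr : (0 : ℝ) < M := by exact_mod_cast hMpos
    have hx : 14 * A * c ^ 2 * L ≤ (z.natAbs : ℝ) := by linarith
    obtain ⟨hVbig, hM2⟩ := high_freq_regime hA hc1 hAc hL69 hR0 hR2 hMr.le hMup hx hzM
    have hAL : 1 * L ≤ A * L := mul_le_mul_of_nonneg_right hA hL.le
    have hAV : 1 * V ≤ A * V := mul_le_mul_of_nonneg_right hA hV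
    have hLz : L ≤ z.natAbs := by
      have : 1 * L ≤ A * c ^ 2 * L := mul_le_mul_of_nonneg_right hAc hL.le
      linarith
    rw [← he6]
    refine high_freq_bound p q hp hq hMpos z hz2 hLz ?_ ?_
    · exact high_freq_exponent hA hV hMr hM2 (by linarith) (Nat.cast_nonneg _) hx
    -- `V ≥ 4 A L ≥ 2 A` absorbs the additive constants in the variance comparison.
    · refine high_freq_exponent hA hV hMr hM2 ?_ (Nat.cast_nonneg _) hx
      have : 0.69 * A ≤ L * A := mul_le_mul_of_nonneg_right hL69.le (by linarith)
      linarith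
  have hfreq := freq_sum_le (fun z => ‖dft (pbdPmf p) M z - dft (pbdPmf q) M z‖ ^ 2)
    (fun z => by positivity) M l (4 * ε ^ 6) (by positivity) hhigh
  have hfold := sq_fold_le (fun k => pbdPmf p k - pbdPmf q k) N M
    (fun z => dft (pbdPmf p) M z - dft (pbdPmf q) M z) (fun ξ => by
      rw [dft_pbd_eq_sum hn, dft_pbd_eq_sum hn', ← Finset.sum_sub_distrib]
      refine Finset.sum_congr rfl fun j _ => ?_
      push_cast
      ring)
  have hwin : 2 * ((4 * A + 6) * D) ≤ M := by
    have : c * D ≤ c * (L + R) := mul_le_mul_of_nonneg_left hDR (by linarith)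
    linarith [show 2 * ((4 * A + 6) * D) = c * D by rw [hc]; ring]
  have hl1 := l1_le_fold (fun k => pbdPmf p k - pbdPmf q k) N M
    (fun k => |(k : ℝ) - pbdMean p| < (4 * A + 6) * D)
    (fun i j => window_injective hwin i j)
  have htail : ∑ j ∈ (Finset.range N).filter
        (fun j : ℕ => ¬ |(j : ℝ) - pbdMean p| < (4 * A + 6) * D), |pbdPmf p j - pbdPmf q j|
      ≤ 4 * ε ^ 6 := by
    calc _ ≤ ∑ j ∈ (Finset.range N).filter
            (fun j : ℕ => ¬ |(j : ℝ) - pbdMean p| < (4 * A + 6) * D),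
            (pbdPmf p j + pbdPmf q j) := by
          refine Finset.sum_le_sum fun j _ => ?_
          have h1 := pbdPmf_nonneg p hp j
          have h2 := pbdPmf_nonneg q hq j
          rw [abs_le]
          constructor <;> linarith
      _ ≤ 4 * ε ^ 6 := by
          rw [Finset.sum_add_distrib]
          linarith
  rw [dTV_pbd_eq hn hn']
  simp only at hfold hl1 hfreq
  set X := ∑ r : ZMod M, |∑ j ∈ Finset.range N with ((j : ℕ) : ZMod M) = r,
    (pbdPmf p j - pbdPmf q j)|
  have hX : X ≤ 5 / 4 * ε := by
    refine abs_le_of_sq_le_sq' ?_ (by positivity) |>.2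
    have : X ^ 2 ≤ ε ^ 2 / 16 + 4 * (4 * ε ^ 6) := by linarith
    linarith [sq_nonneg ε]
  have hεsq : ε ^ 2 ≤ ε / 2 := by
    rw [sq]
    linarith [mul_le_mul_of_nonneg_left hε2.le hε.le]
  linarith
end

section
/- There exist constants c > 0, c' > 0, and n₀ such that for every integer n ≥ n₀ the following holds. Let P be the n-PBD with parameters p_j = (1 + cos(2πj/n))/8 for j = 1,…,n, and let Q be the n-PBD with parameters q_j = (1 + cos((2πj + π)/n))/8 for j = 1,…,n. Then dTV(P,Q) ≤ 2^{−cn}, and, setting j₀ = ⌈n/4⌉, every parameter of Q satisfies |q_i − p_{j₀}| ≥ c'/n for all 1 ≤ i ≤ n. -/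
/-!
The probability generating function of a Poisson binomial distribution is
`∏ j, (1 + p j * (x - 1))`. Substituting `x - 1 = 16 a b` with `a = b + 1` turns each factor
`1 + (1 + cos θ) / 8 * (x - 1)` into `a² + b² + 2 a b cos θ = |a + b e^{iθ}|²`. When `θ` runs through
the angles `2πj/n` (resp. `(2πj + π)/n`), the factorisation of `Xⁿ - α` over the `n`-th roots
of `α` evaluates the product as `(aⁿ - (-b)ⁿ)²` (resp. `(aⁿ + (-b)ⁿ)²`)
(`prod_cos_eq_normSq`). The two generating functions therefore differ by exactly
`-4 (-ab)ⁿ = -4 ((1 - x) / 16)ⁿ` (`genFun_sub`), so the two mass functions differ at `k` by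
`4 · 16⁻ⁿ · (n choose k)` in absolute value, and the total variation distance equals `2 · 8⁻ⁿ`.

For the separation of the parameters, `cos u - cos v = -2 sin ((u + v) / 2) sin ((u - v) / 2)`, where
both half angles are odd multiples of `π / (2n)`. Each sine is thus at least `1 / n` in absolute
value (`inv_le_abs_sin_odd`). The half angles differ by `2π j₀ / n`, which lies in
`[π/2, 5π/6]`, so `1/2 ≤ |sin ((u + v) / 2)| + |sin ((u - v) / 2)|` and one of the two sines is at
least `1/4`.
-/

open scoped Classical

open Polynomial in
/-- The probability generating function of the Poisson binomial distribution with
parameters `p`, as a polynomial. -/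
noncomputable def pbdGenFun {ι : Type*} [Fintype ι] (p : ι → ℝ) : ℝ[X] :=
  ∏ i, (C (p i) * X + C (1 - p i))

open Polynomial in
lemma coeff_pbdGenFun {ι : Type*} [Fintype ι] [DecidableEq ι] (p : ι → ℝ) (k : ℕ) :
    (pbdGenFun p).coeff k = pbdPmf p k := by
  unfold pbdGenFun pbdPmf
  rw [Finset.prod_add, finsetSum_coeff, Finset.sum_filter]
  refine Finset.sum_congr (by congr) fun S _ => ?_
  rw [Finset.prod_mul_distrib, Finset.prod_const, ← map_prod, ← map_prod, coeff_mul_C,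
    coeff_C_mul, coeff_X_pow]
  by_cases h : S.card = k
  · have : (Finset.univ \ S : Finset ι) = Sᶜ := by ext; simp
    simp [h, this]
  · simp [h, Ne.symm h]

open Polynomial in
/-- The product of `|a + b e^{i(2πj/n + ψ)}|²` over `j`, computed from the factorisation of
`Xⁿ - αⁿ` with `α = -b e^{iψ}`. -/
lemma prod_cos_eq_normSq (n : ℕ) (hn : 0 < n) (a b ψ : ℝ) :
    ∏ j : Fin n, (a ^ 2 + b ^ 2 + 2 * a * b * Real.cos (2 * Real.pi * (j : ℕ) / n + ψ)) =
      Complex.normSq ((a : ℂ) ^ n - (-(b : ℂ)) ^ n * Complex.exp ((n * ψ : ℝ) * Complex.I)) := by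
  have hζ := Complex.isPrimitiveRoot_exp n hn.ne'
  have key := congrArg (Polynomial.eval (a : ℂ))
    (X_pow_sub_C_eq_prod hζ hn (α := -(b : ℂ) * Complex.exp (ψ * Complex.I)) rfl)
  rw [eval_prod] at key
  simp only [eval_sub, eval_pow, eval_X, eval_C] at key
  have hexp : (-(b : ℂ) * Complex.exp (ψ * Complex.I)) ^ n =
      (-(b : ℂ)) ^ n * Complex.exp ((n * ψ : ℝ) * Complex.I) := by
    rw [mul_pow, ← Complex.exp_nat_mul]
    push_cast
    ring_nf
  rw [← hexp, key, map_prod,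
    ← Fin.prod_univ_eq_prod_range (fun i => Complex.normSq ((a : ℂ) -
      Complex.exp (2 * Real.pi * Complex.I / n) ^ i * (-(b : ℂ) * Complex.exp (ψ * Complex.I)))) n]
  refine Finset.prod_congr rfl fun j _ => ?_
  set t : ℝ := 2 * Real.pi * (j : ℕ) / n + ψ with ht
  have h1 : (a : ℂ) - Complex.exp (2 * Real.pi * Complex.I / n) ^ (j : ℕ) *
      (-(b : ℂ) * Complex.exp (ψ * Complex.I)) =
      ((a + b * Real.cos t : ℝ) : ℂ) + ((b * Real.sin t : ℝ) : ℂ) * Complex.I := by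
    have h2 : Complex.exp (2 * Real.pi * Complex.I / n) ^ (j : ℕ) * Complex.exp (ψ * Complex.I) =
        Complex.cos t + Complex.sin t * Complex.I := by
      rw [← Complex.exp_nat_mul, ← Complex.exp_add, ← Complex.exp_mul_I, ht]
      push_cast
      ring_nf
    push_cast
    linear_combination (b : ℂ) * h2
  rw [h1, Complex.normSq_add_mul_I]
  linear_combination (-b ^ 2) * Real.sin_sq_add_cos_sq t

open Polynomial in
lemma genFun_sub (n : ℕ) (hn : 0 < n) (p q : Fin n → ℝ)
    (hp : ∀ j : Fin n, p j = (1 + Real.cos (2 * Real.pi * ((j : ℕ) + 1) / n)) / 8)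
    (hq : ∀ j : Fin n,
      q j = (1 + Real.cos ((2 * Real.pi * ((j : ℕ) + 1) + Real.pi) / n)) / 8) :
    pbdGenFun p - pbdGenFun q = C (-4 * (-1 / 16) ^ n) * (X + C (-1)) ^ n := by
  have hn' : (n : ℝ) ≠ 0 := by positivity
  apply eq_of_infinite_eval_eq
  refine (Set.Ici_infinite (1 : ℝ)).mono fun x hx => ?_
  have hx : (1 : ℝ) ≤ x := hx
  -- The nonnegative root `b` of `16 b (b + 1) = x - 1`.
  obtain ⟨b, hb⟩ : ∃ b : ℝ, x = 1 + 16 * (b + 1) * b := by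
    refine ⟨(√(1 + (x - 1) / 4) - 1) / 2, ?_⟩
    have := Real.sq_sqrt (show (0 : ℝ) ≤ 1 + (x - 1) / 4 by linarith)
    linear_combination (-4) * this
  have hP : (pbdGenFun p).eval x = ((b + 1) ^ n - (-b) ^ n) ^ 2 := by
    have h := prod_cos_eq_normSq n hn (b + 1) b (2 * Real.pi / n)
    have h2 : ((n * (2 * Real.pi / n) : ℝ) : ℂ) * Complex.I = 2 * Real.pi * Complex.I := by
      rw [mul_div_cancel₀ _ hn']; push_cast; ring
    have h3 : ((b + 1 : ℝ) : ℂ) ^ n - (-(b : ℂ)) ^ n * 1 =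
        (((b + 1) ^ n - (-b) ^ n : ℝ) : ℂ) := by push_cast; ring
    rw [h2, Complex.exp_two_pi_mul_I, h3, Complex.normSq_ofReal, ← sq] at h
    rw [← h, pbdGenFun, eval_prod]
    refine Finset.prod_congr rfl fun j _ => ?_
    have : 2 * Real.pi * ((j : ℕ) : ℝ) / n + 2 * Real.pi / n =
      2 * Real.pi * ((j : ℕ) + 1) / n := by ring
    rw [this]
    simp only [eval_add, eval_mul, eval_C, eval_X, hp j, hb]
    ring
  have hQ : (pbdGenFun q).eval x = ((b + 1) ^ n + (-b) ^ n) ^ 2 := by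
    have h := prod_cos_eq_normSq n hn (b + 1) b (3 * Real.pi / n)
    have h2 : ((n * (3 * Real.pi / n) : ℝ) : ℂ) * Complex.I =
        2 * Real.pi * Complex.I + Real.pi * Complex.I := by
      rw [mul_div_cancel₀ _ hn']; push_cast; ring
    have h3 : ((b + 1 : ℝ) : ℂ) ^ n - (-(b : ℂ)) ^ n * (1 * (-1)) =
        (((b + 1) ^ n + (-b) ^ n : ℝ) : ℂ) := by push_cast; ring
    rw [h2, Complex.exp_add, Complex.exp_two_pi_mul_I, Complex.exp_pi_mul_I, h3,
      Complex.normSq_ofReal, ← sq] at h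
    rw [← h, pbdGenFun, eval_prod]
    refine Finset.prod_congr rfl fun j _ => ?_
    have : 2 * Real.pi * ((j : ℕ) : ℝ) / n + 3 * Real.pi / n =
      (2 * Real.pi * ((j : ℕ) + 1) + Real.pi) / n := by ring
    rw [this]
    simp only [eval_add, eval_mul, eval_C, eval_X, hq j, hb]
    ring
  simp only [Set.mem_ofPred_eq, eval_sub, eval_mul, eval_C, eval_pow, eval_add, eval_X, hP, hQ]
  have h4 : (-1 / 16 : ℝ) ^ n * (x + -1) ^ n = (b + 1) ^ n * (-b) ^ n := by
    rw [← mul_pow, ← mul_pow, hb]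
    ring
  linear_combination 4 * h4

lemma dTV_eq (n : ℕ) (hn : 0 < n) (p q : Fin n → ℝ)
    (hp : ∀ j : Fin n, p j = (1 + Real.cos (2 * Real.pi * ((j : ℕ) + 1) / n)) / 8)
    (hq : ∀ j : Fin n,
      q j = (1 + Real.cos ((2 * Real.pi * ((j : ℕ) + 1) + Real.pi) / n)) / 8) :
    dTV (pbdPmf p) (pbdPmf q) = 2 * (1 / 8) ^ n := by
  have hk : ∀ k, |pbdPmf p k - pbdPmf q k| = 4 * (1 / 16) ^ n * (n.choose k : ℝ) := by
    intro k
    have h := congrArg (fun f => Polynomial.coeff f k) (genFun_sub n hn p q hp hq)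
    simp only [Polynomial.coeff_sub, coeff_pbdGenFun, Polynomial.coeff_C_mul,
      Polynomial.coeff_X_add_C_pow] at h
    rw [h]
    simp [abs_mul, abs_pow, abs_div]
  unfold dTV
  simp only [hk]
  rw [tsum_eq_sum (s := Finset.range (n + 1)), ← Finset.mul_sum]
  · have h1 : ∑ k ∈ Finset.range (n + 1), (n.choose k : ℝ) = 2 ^ n := by
      exact_mod_cast Nat.sum_range_choose n
    have h2 : (1 / 8 : ℝ) ^ n = (1 / 16) ^ n * 2 ^ n := by
      rw [← mul_pow]; norm_num
    rw [h1, h2]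
    ring
  · intro k hk
    rw [Nat.choose_eq_zero_of_lt (by simpa using hk)]
    simp

lemma inv_le_abs_sin_odd (n : ℕ) (hn : 0 < n) (m : ℤ) (hm : Odd m) :
    1 / (n : ℝ) ≤ |Real.sin (m * Real.pi / (2 * n))| := by
  have hn' : (0 : ℝ) < n := by positivity
  have hpi := Real.pi_pos
  -- Jordan's inequality on the first quadrant.
  have base : ∀ r : ℝ, 1 ≤ r → r ≤ n → 1 / (n : ℝ) ≤ Real.sin (r * Real.pi / (2 * n)) := by
    intro r h1 h2
    have h := Real.mul_le_sin (x := r * Real.pi / (2 * n)) (by positivity) (by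
      rw [div_le_div_iff₀ (by positivity) (by positivity)]
      nlinarith)
    have h3 : 2 / Real.pi * (r * Real.pi / (2 * n)) = r / n := by
      field_simp
    rw [h3] at h
    exact (div_le_div_of_nonneg_right h1 hn'.le).trans h
  -- Reduce `m` modulo `2 n`, which shifts the angle by a multiple of `π`.
  obtain ⟨r, k, hr0, hr1, hrm⟩ : ∃ r k : ℤ, 1 ≤ r ∧ r ≤ 2 * n - 1 ∧ m = r + 2 * n * k := by
    have hpos : (0 : ℤ) < 2 * n := by positivity
    refine ⟨m % (2 * n), m / (2 * n), ?_, ?_, (Int.emod_add_mul_ediv _ _).symm⟩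
    · have h0 := Int.emod_nonneg m hpos.ne'
      rcases h0.lt_or_eq with h | h
      · omega
      · obtain ⟨d, hd⟩ := Int.dvd_of_emod_eq_zero h.symm
        obtain ⟨e, he⟩ := hm
        have : 2 * (n * d) = 2 * e + 1 := by rw [← he, hd]; ring
        omega
    · have := Int.emod_lt_of_pos m hpos
      omega
  have hang : (m : ℝ) * Real.pi / (2 * n) = r * Real.pi / (2 * n) + k * Real.pi := by
    rw [hrm]; push_cast; field_simp
  rw [hang, Real.sin_add_int_mul_pi, abs_mul, abs_zpow, abs_neg, abs_one, one_zpow, one_mul]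
  have hr0' : (1 : ℝ) ≤ r := by exact_mod_cast hr0
  have hr1' : (r : ℝ) ≤ 2 * n - 1 := by exact_mod_cast hr1
  refine le_trans ?_ (le_abs_self _)
  rcases le_total (r : ℝ) n with h | h
  · exact base r hr0' h
  · rw [← Real.sin_pi_sub]
    have : Real.pi - r * Real.pi / (2 * n) = (2 * n - r) * Real.pi / (2 * n) := by
      field_simp
    rw [this]
    exact base _ (by linarith) (by linarith)

lemma separation (n : ℕ) (hn : 6 ≤ n) (i : ℕ) :
    1 / 16 / (n : ℝ) ≤ |(1 + Real.cos ((2 * Real.pi * (i + 1) + Real.pi) / n)) / 8 -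
      (1 + Real.cos (2 * Real.pi * (⌈(n : ℝ) / 4⌉₊ : ℝ) / n)) / 8| := by
  have hn6 : (6 : ℝ) ≤ n := by exact_mod_cast hn
  have hn0 : (0 : ℝ) < n := by linarith
  have hpi := Real.pi_pos
  set J : ℕ := ⌈(n : ℝ) / 4⌉₊ with hJ
  have hJ1 : (n : ℝ) / 4 ≤ J := Nat.le_ceil _
  have hJ2 : (J : ℝ) < n / 4 + 1 := Nat.ceil_lt_add_one (by positivity)
  set α : ℝ := ((2 * i + 3 + 2 * J : ℤ) : ℝ) * Real.pi / (2 * n) with hα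
  set β : ℝ := ((2 * i + 3 - 2 * J : ℤ) : ℝ) * Real.pi / (2 * n) with hβ
  have hsα : 1 / (n : ℝ) ≤ |Real.sin α| :=
    inv_le_abs_sin_odd n (by omega) _ ⟨i + 1 + J, by ring⟩
  have hsβ : 1 / (n : ℝ) ≤ |Real.sin β| :=
    inv_le_abs_sin_odd n (by omega) _ ⟨i + 1 - J, by ring⟩
  have hcos : (1 + Real.cos ((2 * Real.pi * (i + 1) + Real.pi) / n)) / 8 -
      (1 + Real.cos (2 * Real.pi * (J : ℝ) / n)) / 8 = -(1 / 4) * (Real.sin α * Real.sin β) := by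
    have h := Real.cos_sub_cos ((2 * Real.pi * (i + 1) + Real.pi) / n) (2 * Real.pi * (J : ℝ) / n)
    have e1 : ((2 * Real.pi * (i + 1) + Real.pi) / n + 2 * Real.pi * (J : ℝ) / n) / 2 = α := by
      rw [hα]; push_cast; field_simp; ring
    have e2 : ((2 * Real.pi * (i + 1) + Real.pi) / n - 2 * Real.pi * (J : ℝ) / n) / 2 = β := by
      rw [hβ]; push_cast; field_simp; ring
    rw [e1, e2] at h
    linear_combination h / 8
  have hdiff : α - β = 2 * Real.pi * J / n := by
    rw [hα, hβ]; push_cast; field_simp; ring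
  have hsum : 1 / 2 ≤ |Real.sin α| + |Real.sin β| := by
    have h1 : 1 / 2 ≤ Real.sin (α - β) := by
      rw [← Real.cos_sub_pi_div_two, ← Real.cos_pi_div_three, hdiff]
      have hlow : Real.pi / 2 ≤ 2 * Real.pi * J / n := by
        rw [div_le_div_iff₀ (by positivity) hn0]; nlinarith
      have hup : 2 * Real.pi * J / n ≤ 5 * Real.pi / 6 := by
        rw [div_le_div_iff₀ hn0 (by positivity)]; nlinarith
      exact Real.cos_le_cos_of_nonneg_of_le_pi (by linarith) (by linarith) (by linarith)
    have h2 : Real.sin (α - β) ≤ |Real.sin α| + |Real.sin β| := by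
      rw [Real.sin_sub]
      refine (le_abs_self _).trans ((abs_sub _ _).trans ?_)
      rw [abs_mul, abs_mul]
      have := Real.abs_cos_le_one α
      have := Real.abs_cos_le_one β
      nlinarith [abs_nonneg (Real.sin α), abs_nonneg (Real.sin β)]
    linarith
  have hprod : 1 / 4 * (1 / (n : ℝ)) ≤ |Real.sin α| * |Real.sin β| := by
    have hpos : 0 < 1 / (n : ℝ) := by positivity
    rcases le_total (1 / 4) |Real.sin α| with h | h
    · exact mul_le_mul h hsβ hpos.le (abs_nonneg _)
    · rw [mul_comm |Real.sin α|]
      exact mul_le_mul (by linarith) hsα hpos.le (abs_nonneg _)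
  rw [hcos, abs_mul, abs_mul]
  have : |(-(1 / 4) : ℝ)| = 1 / 4 := by norm_num
  rw [this, div_eq_mul_one_div]
  linarith


/-- The two explicit PBDs from the lower bound construction: they are exponentially close
in total variation distance, yet the parameters of `Q` all stay Ω(1/n) away from the
parameter `p_{j₀}` of `P` with `j₀ = ⌈n/4⌉`. -/
theorem explicit_close_pbds_with_far_parameters :
    ∃ c c' : ℝ, ∃ n₀ : ℕ, 0 < c ∧ 0 < c' ∧
      ∀ n : ℕ, n₀ ≤ n →
        ∀ p q : Fin n → ℝ,
          (∀ j : Fin n, p j = (1 + Real.cos (2 * Real.pi * ((j : ℕ) + 1) / n)) / 8) →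
          (∀ j : Fin n, q j = (1 + Real.cos ((2 * Real.pi * ((j : ℕ) + 1) + Real.pi) / n)) / 8) →
          dTV (pbdPmf p) (pbdPmf q) ≤ (2 : ℝ) ^ (-(c * n)) ∧
          ∀ i : Fin n,
            c' / n ≤ |q i - (1 + Real.cos (2 * Real.pi * (⌈(n : ℝ) / 4⌉₊ : ℝ) / n)) / 8| := by
  refine ⟨2, 1 / 16, 6, by norm_num, by norm_num, fun n hn p q hp hq => ⟨?_, fun i => ?_⟩⟩
  · rw [dTV_eq n (by omega) p q hp hq]
    have h1 : (2 : ℝ) ^ (-(2 * (n : ℝ))) = (1 / 4) ^ n := by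
      rw [Real.rpow_neg (by norm_num), Real.rpow_mul (by norm_num), Real.rpow_natCast,
        one_div, inv_pow]
      norm_num
    have h2 : (1 / 8 : ℝ) ^ n = (1 / 4) ^ n * (1 / 2) ^ n := by
      rw [← mul_pow]; norm_num
    have h3 : (1 / 2 : ℝ) ^ n ≤ 1 / 2 :=
      pow_le_of_le_one (by norm_num) (by norm_num) (by omega)
    have h4 : (0 : ℝ) < (1 / 4) ^ n := by positivity
    rw [h1, h2]
    nlinarith
  · rw [hq i]
    exact separation n hn i
end

section
/- For every integer n ≥ 2 and every integer l with 1 ≤ l ≤ n−1, Σ_{j=1}^{n} ((1 + cos(2πj/n))/8)^l = Σ_{j=1}^{n} ((1 + cos((2j+1)π/n))/8)^l. -/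
/-!
Writing `z = exp (iθ)`, one has `(1 + cos θ) / 8 = z⁻¹ (1 + z)² / 16`, so the `l`-th power of this
number is `16⁻ˡ ∑ₖ (2l choose k) zᵏ⁻ˡ` with `0 ≤ k ≤ 2l`. Both sides of the theorem sum this
expression over `z = c ωʲ`, where `ω = exp (2πi/n)`, with `c = 1` on the left and `c = exp (πi/n)`
on the right. Since `|k - l| ≤ l < n`, summing `ωʲ⁽ᵏ⁻ˡ⁾` over a full period kills every term but
`k = l`, which does not involve `c` (`sum_laurent_pow`). This Fourier argument replaces the
Newton–Girard identities.
-/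

theorem sum_pow_Icc_eq_zero {n : ℕ} {ρ : ℂ} (hρ : ρ ^ n = 1) (h1 : ρ ≠ 1) :
    ∑ j ∈ Finset.Icc 1 n, ρ ^ j = 0 := by
  have hI : Finset.Icc 1 n = Finset.Ico 1 (n + 1) := by
    ext; simp only [Finset.mem_Icc, Finset.mem_Ico]; omega
  rw [hI, geom_sum_Ico h1 (by omega), pow_succ, hρ]
  simp

/-- The sum of `((2 + z + z⁻¹) / 16) ^ l` over a coset `z ∈ c • μₙ` of the `n`-th roots of unity
does not depend on `c` when `l < n`. -/
theorem sum_laurent_pow {n l : ℕ} (hl : l < n) {ω c : ℂ} (hω : IsPrimitiveRoot ω n) (hc : c ≠ 0) :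
    ∑ j ∈ Finset.Icc 1 n, ((2 + c * ω ^ j + (c * ω ^ j)⁻¹) / 16) ^ l =
      n * (2 * l).choose l / 16 ^ l := by
  have hω0 : ω ≠ 0 := hω.ne_zero (by omega)
  have key : ∀ j : ℕ, ((2 + c * ω ^ j + (c * ω ^ j)⁻¹) / 16) ^ l =
      ∑ k ∈ Finset.range (2 * l + 1),
        ((2 * l).choose k / 16 ^ l * (c ^ k * c⁻¹ ^ l)) * (ω ^ k * ω⁻¹ ^ l) ^ j := by
    intro j
    have hz : c * ω ^ j ≠ 0 := mul_ne_zero hc (pow_ne_zero _ hω0)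
    have e : (2 + c * ω ^ j + (c * ω ^ j)⁻¹) / 16 =
        (c * ω ^ j + 1) ^ 2 * (c * ω ^ j)⁻¹ / 16 := by
      field_simp; ring
    rw [e, div_pow, mul_pow, ← pow_mul, add_pow, Finset.sum_mul, Finset.sum_div]
    refine Finset.sum_congr rfl fun k _ => ?_
    simp only [mul_inv, mul_pow, one_pow, ← inv_pow, ← pow_mul]
    rw [mul_comm j k, mul_comm j l]
    ring
  simp_rw [key]
  rw [Finset.sum_comm]
  simp_rw [← Finset.mul_sum]
  rw [Finset.sum_eq_single_of_mem l (by simp; omega)]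
  · simp only [← mul_pow, mul_inv_cancel₀ hc, mul_inv_cancel₀ hω0, one_pow]
    simp; ring
  · intro k hk hkl
    rw [sum_pow_Icc_eq_zero, mul_zero]
    · rw [mul_pow, ← pow_mul, ← pow_mul, mul_comm k, mul_comm l, pow_mul, pow_mul, inv_pow,
        hω.pow_eq_one]
      simp
    · intro h
      have hd : (n : ℤ) ∣ k - l := by
        rw [← hω.zpow_eq_one_iff_dvd, zpow_sub₀ hω0, zpow_natCast, zpow_natCast, div_eq_mul_inv,
          ← inv_pow, h]
      -- The divisibility together with `|k - l| ≤ l < n` forces `k = l`.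
      have hk' : k ≤ 2 * l := by simpa [Nat.lt_succ_iff] using hk
      have := Int.eq_zero_of_abs_lt_dvd hd (by rw [abs_lt]; omega)
      omega

theorem ofReal_one_add_cos_div (θ : ℝ) (z : ℂ) (hz : z = Complex.exp (θ * Complex.I)) :
    (((1 + Real.cos θ) / 8 : ℝ) : ℂ) = (2 + z + z⁻¹) / 16 := by
  rw [hz, ← Complex.exp_neg]
  push_cast
  rw [Complex.cos, neg_mul]
  ring

/-- The power sums of the roots of `T_n(8x−1) − 1` and of `T_n(8x−1) + 1` agree in all
degrees `1 ≤ l ≤ n − 1`. -/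
theorem chebyshev_power_sums_agree (n : ℕ) (hn : 2 ≤ n) (l : ℕ) (hl1 : 1 ≤ l)
    (hl2 : l ≤ n - 1) :
    (∑ j ∈ Finset.Icc 1 n, ((1 + Real.cos (2 * Real.pi * (j : ℝ) / n)) / 8) ^ l) =
      ∑ j ∈ Finset.Icc 1 n, ((1 + Real.cos ((2 * (j : ℝ) + 1) * Real.pi / n)) / 8) ^ l := by
  have hω := Complex.isPrimitiveRoot_exp n (by omega)
  have hl : l < n := by omega
  apply Complex.ofReal_injective
  rw [Complex.ofReal_sum, Complex.ofReal_sum]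
  simp_rw [Complex.ofReal_pow]
  have h1 := sum_laurent_pow hl hω one_ne_zero
  have h2 := sum_laurent_pow hl hω (Complex.exp_ne_zero (Real.pi * Complex.I / n))
  refine Eq.trans ?_ (h1.trans (h2.symm.trans ?_))
  · refine Finset.sum_congr rfl fun j _ => ?_
    rw [ofReal_one_add_cos_div]
    rw [one_mul, ← Complex.exp_nat_mul]
    congr 1
    push_cast
    ring
  · refine Finset.sum_congr rfl fun j _ => ?_
    rw [ofReal_one_add_cos_div]
    rw [← Complex.exp_nat_mul, ← Complex.exp_add]
    congr 1
    push_cast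
    ring
end

section
/- Let M be a positive integer, m an integer, and I = {m, m+1, …, m+M−1} a set of M consecutive integers. Let P and Q be probability distributions on ℤ, and let δ ∈ [0,1] satisfy P(I) ≥ 1−δ and Q(I) ≥ 1−δ. Let P mod M and Q mod M denote the pushforward distributions on ℤ/Mℤ under reduction modulo M. Then dTV(P,Q) ≤ 2δ + dTV(P mod M, Q mod M). -/
/-!
Write `D = P - Q` and let `I` be the window. Each residue class `r` meets `I` in exactly one point
`x`, so the mass of `D` on the class `r` is `D x` plus the mass of `D` on the part of the class
outside `I`. Hence `|D x| ≤ |(P mod M) r - (Q mod M) r| + ∑ |D y|`, with `y` ranging over the part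
of the class outside `I` (`abs_sub_le_mod`). Summing over `I` and adding the mass of `|D|` outside
`I`, that outside mass is counted twice. It is at most `2δ`, since `P` and `Q` each have mass at
most `δ` outside `I`. Halving gives the bound.
-/

open scoped Classical

/-- Total variation distance between two distributions on ℤ. -/
noncomputable def dTVZ (P Q : ℤ → ℝ) : ℝ := (1 / 2) * ∑' x : ℤ, |P x - Q x|

/-- The pushforward of a distribution on ℤ under reduction modulo `M`. -/
noncomputable def modDist (M : ℕ) (P : ℤ → ℝ) (r : ZMod M) : ℝ :=
  ∑' x : ℤ, if ((x : ZMod M) = r) then P x else 0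

/-- Total variation distance between two distributions on ℤ/Mℤ. -/
noncomputable def dTVMod (M : ℕ) (P Q : ℤ → ℝ) : ℝ :=
  (1 / 2) * ∑' r : ZMod M, |modDist M P r - modDist M Q r|

/-- Two elements of a window of `M` consecutive integers with the same residue are equal. -/
lemma eq_of_cast_eq_of_mem_window {M : ℕ} {m x y : ℤ}
    (hx : x ∈ Finset.Icc m (m + M - 1)) (hy : y ∈ Finset.Icc m (m + M - 1))
    (h : (x : ZMod M) = (y : ZMod M)) : x = y := by
  rw [ZMod.intCast_eq_intCast_iff_dvd_sub] at h
  rw [Finset.mem_Icc] at hx hy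
  have h0 : y - x = 0 := by
    apply Int.eq_zero_of_abs_lt_dvd h
    rw [abs_lt]
    constructor <;> linarith [hx.1, hx.2, hy.1, hy.2]
  linarith

lemma summable_ite_of_summable {f : ℤ → ℝ} (hf : Summable f) (p : ℤ → Prop)
    [DecidablePred p] :
    Summable (fun y => if p y then f y else 0) := by
  refine (hf.indicator {y | p y}).congr fun y => ?_
  by_cases hy : p y <;> simp [hy]

/-- `|P x - Q x|` at a point `x` of the window is controlled by the discrepancy on the residue class
of `x` together with the mass of `|P - Q|` on the rest of that class, which lies outside the
window. -/
lemma abs_sub_le_mod {M : ℕ} {m : ℤ} {P Q : ℤ → ℝ} (hP : Summable P) (hQ : Summable Q)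
    {x : ℤ} (hx : x ∈ Finset.Icc m (m + M - 1)) :
    |P x - Q x| ≤ |modDist M P x - modDist M Q x| +
      ∑' y : ℤ, if (y : ZMod M) = x then
        (if y ∈ Finset.Icc m (m + M - 1) then 0 else |P y - Q y|) else 0 := by
  have hD : Summable (fun y => P y - Q y) := hP.sub hQ
  have hg : Summable (fun y : ℤ => if (y : ZMod M) = x then
        (if y ∈ Finset.Icc m (m + M - 1) then 0 else |P y - Q y|) else 0) := by
    apply summable_ite_of_summable
    refine (summable_ite_of_summable hD.abs (fun y => y ∉ Finset.Icc m (m + M - 1))).congr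
      fun y => ?_
    by_cases hy : y ∈ Finset.Icc m (m + M - 1) <;> simp only [hy, not_true, not_false_iff, if_true, if_false]
  have h1 : HasSum (fun y : ℤ => if (y : ZMod M) = x then P y - Q y else 0)
      (modDist M P x - modDist M Q x) := by
    have := (summable_ite_of_summable hP (fun y : ℤ => (y : ZMod M) = x)).hasSum.sub
      (summable_ite_of_summable hQ (fun y : ℤ => (y : ZMod M) = x)).hasSum
    simp only [modDist]
    refine this.congr_fun fun y => ?_
    split_ifs <;> simp
  have h2 : HasSum (fun y : ℤ => if y = x then P x - Q x else 0) (P x - Q x) :=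
    hasSum_ite_eq x _
  have h3 := h1.sub h2
  have h4 : |(modDist M P x - modDist M Q x) - (P x - Q x)| ≤
      ∑' y : ℤ, if (y : ZMod M) = x then
        (if y ∈ Finset.Icc m (m + M - 1) then 0 else |P y - Q y|) else 0 := by
    rw [← h3.tsum_eq, ← Real.norm_eq_abs]
    refine tsum_of_norm_bounded hg.hasSum fun y => ?_
    rw [Real.norm_eq_abs]
    by_cases hyx : y = x
    · subst hyx
      simp [hx]
    · by_cases hc : (y : ZMod M) = x
      · have hy : y ∉ Finset.Icc m (m + M - 1) := fun hy =>
          hyx (eq_of_cast_eq_of_mem_window hy hx hc)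
        rw [if_pos hc, if_pos hc, if_neg hyx, if_neg hy, sub_zero]
      · rw [if_neg hc, if_neg hc, if_neg hyx, sub_zero, abs_zero]
  have h5 := abs_sub_abs_le_abs_sub (P x - Q x) (modDist M P x - modDist M Q x)
  rw [abs_sub_comm (P x - Q x)] at h5
  linarith

/-- If `P` and `Q` each put mass at least `1 − δ` on the same window of `M` consecutive
integers, then `dTV(P,Q) ≤ 2δ + dTV(P mod M, Q mod M)`. -/
theorem tv_from_tv_mod (M : ℕ) (hM : 0 < M) (m : ℤ)
    (P Q : ℤ → ℝ) (hPnn : ∀ x, 0 ≤ P x) (hQnn : ∀ x, 0 ≤ Q x)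
    (hPsum : HasSum P 1) (hQsum : HasSum Q 1)
    (δ : ℝ) (hδ : δ ∈ Set.Icc (0 : ℝ) 1)
    (hPI : 1 - δ ≤ ∑ x ∈ Finset.Icc m (m + M - 1), P x)
    (hQI : 1 - δ ≤ ∑ x ∈ Finset.Icc m (m + M - 1), Q x) :
    dTVZ P Q ≤ 2 * δ + dTVMod M P Q := by
  have : NeZero M := ⟨hM.ne'⟩
  set I := Finset.Icc m (m + M - 1) with hI
  set g : ℤ → ℝ := fun y => if y ∈ I then 0 else |P y - Q y| with hgdef
  have hP := hPsum.summable
  have hQ := hQsum.summable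
  have hg : Summable g := by
    refine (summable_ite_of_summable (hP.sub hQ).abs (fun y => y ∉ I)).congr fun y => ?_
    by_cases hy : y ∈ I <;> simp [hgdef, hy]
  have hwin : ∀ f : ℤ → ℝ, HasSum (fun y => if y ∈ I then f y else 0) (∑ x ∈ I, f x) := by
    intro f
    have h := hasSum_sum_of_ne_finset_zero (f := fun y => if y ∈ I then f y else 0) (s := I)
      (L := .unconditional ℤ)
      (fun y hy => if_neg hy)
    rwa [Finset.sum_congr rfl (fun y hy => if_pos hy)] at h
  have hsplit : ∑' x, |P x - Q x| = ∑ x ∈ I, |P x - Q x| + ∑' y, g y := by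
    rw [← ((hwin fun x => |P x - Q x|).add hg.hasSum).tsum_eq]
    refine tsum_congr fun y => ?_
    by_cases hy : y ∈ I <;> simp [hgdef, hy]
  have hout : ∑' y, g y ≤ 2 * δ := by
    have h := hasSum_le (fun y => ?_) (hg.hasSum.add (hwin fun x => P x + Q x))
      (hPsum.add hQsum)
    · rw [Finset.sum_add_distrib] at h
      linarith
    · by_cases hy : y ∈ I
      · simp [hgdef, hy]
      · simp only [hgdef, hy, if_false, add_zero]
        rw [abs_le]
        constructor <;> linarith [hPnn y, hQnn y]
  set F : ZMod M → ℝ := fun r => |modDist M P r - modDist M Q r| +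
    ∑' y : ℤ, if (y : ZMod M) = r then g y else 0 with hF
  have hg0 : ∀ y, 0 ≤ g y := fun y => by
    simp only [hgdef]
    split_ifs <;> positivity
  have hF0 : ∀ r, 0 ≤ F r := fun r => add_nonneg (abs_nonneg _) <| tsum_nonneg fun y => by
    split_ifs
    · exact hg0 y
    · exact le_rfl
  have hinj : Set.InjOn (fun x : ℤ => (x : ZMod M)) I := fun x hx y hy h =>
    eq_of_cast_eq_of_mem_window hx hy h
  have hin : ∑ x ∈ I, |P x - Q x| ≤ ∑ r, F r :=
    calc ∑ x ∈ I, |P x - Q x| ≤ ∑ x ∈ I, F (x : ZMod M) :=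
          Finset.sum_le_sum fun x hx => abs_sub_le_mod hP hQ hx
      _ = ∑ r ∈ I.image (fun x : ℤ => (x : ZMod M)), F r := (Finset.sum_image hinj).symm
      _ ≤ ∑ r, F r :=
          Finset.sum_le_sum_of_subset_of_nonneg (Finset.subset_univ _) fun r _ _ => hF0 r
  -- The residue classes partition `ℤ`, so the outside masses of the classes add up to that of `ℤ`.
  have hclasses : ∑ r : ZMod M, ∑' y : ℤ, (if (y : ZMod M) = r then g y else 0) = ∑' y, g y := by
    rw [← Summable.tsum_finsetSum fun r _ => summable_ite_of_summable hg _]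
    exact tsum_congr fun y => by simp
  rw [hF, Finset.sum_add_distrib, hclasses] at hin
  rw [dTVZ, dTVMod, hsplit, tsum_fintype (L := .unconditional (ZMod M))]
  linarith
end
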